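/- Suppose C is a contribution profile with C_i > 0 for all i ∈ N and every agent has at least one acceptable project. If δ and δ' are both Nash distributions for C, then u_i(δ) = u_i(δ') for every agent i ∈ N. -/

import Mathlib

/-!
The weighted Nash product is strictly log-concave on the open positive orthant of utility profiles:
its logarithm is the sum of the strictly concave functions `C i * log (y i)` of separate
coordinates. The utility profiles of distributions form a convex set, being a linear image of a
simplex, so at most one positive profile in it maximizes the Nash product. Every Nash distribution
has a positive profile: the uniform distribution has positive Nash product, hence so does each
maximizer, and then no factor of its Nash product can vanish.
-/

open Finset

/-- A distribution of value `V`: nonnegative and sums to `V`. -/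
def IsDistribution {A : Type*} [Fintype A] (δ : A → ℝ) (V : ℝ) : Prop :=
  (∀ x, 0 ≤ δ x) ∧ ∑ x, δ x = V

/-- Agent's (linear) utility of a distribution. -/
def util {A : Type*} [Fintype A] (u : A → ℝ) (δ : A → ℝ) : ℝ :=
  ∑ x, δ x * u x

/-- The Nash product of a distribution (real exponentiation, `0 ^ 0 = 1`). -/
noncomputable def nashProduct {A N : Type*} [Fintype A] [Fintype N]
    (u : N → A → ℝ) (C : N → ℝ) (δ : A → ℝ) : ℝ :=
  ∏ i, (util (u i) δ) ^ (C i)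

/-- A Nash distribution for contribution profile `C`: a maximizer of the Nash
product over `Δ(|C|)`. -/
def IsNashDistribution {A N : Type*} [Fintype A] [Fintype N]
    (u : N → A → ℝ) (C : N → ℝ) (δ : A → ℝ) : Prop :=
  IsDistribution δ (∑ i, C i) ∧
    ∀ δ' : A → ℝ, IsDistribution δ' (∑ i, C i) →
      nashProduct u C δ' ≤ nashProduct u C δ

section StrictConcavity

variable {𝕜 : Type*}

theorem strictConcaveOn_pi_sum {ι β : Type*} {E : ι → Type*} [Fintype ι] [Semiring 𝕜]
    [PartialOrder 𝕜] [AddCommMonoid β] [PartialOrder β] [IsOrderedCancelAddMonoid β] [Module 𝕜 β]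
    [∀ i, AddCommMonoid (E i)] [∀ i, Module 𝕜 (E i)] {s : ∀ i, Set (E i)} {f : ∀ i, E i → β}
    (hf : ∀ i, StrictConcaveOn 𝕜 (s i) (f i)) :
    StrictConcaveOn 𝕜 (Set.univ.pi s) fun y : ∀ i, E i => ∑ i, f i (y i) := by
  refine ⟨convex_pi fun i _ => (hf i).1, fun a ha b hb hab p q hp hq hpq => ?_⟩
  obtain ⟨j, hj⟩ := Function.ne_iff.mp hab
  simp only [smul_sum, ← sum_add_distrib]
  exact sum_lt_sum
    (fun i _ => (hf i).concaveOn.2 (ha i trivial) (hb i trivial) hp.le hq.le hpq)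
    ⟨j, mem_univ j, (hf j).2 (ha j trivial) (hb j trivial) hj hp hq hpq⟩

theorem strictConcaveOn_const_mul {E : Type*} [CommSemiring 𝕜] [PartialOrder 𝕜]
    [IsStrictOrderedRing 𝕜] [AddCommMonoid E] [SMul 𝕜 E] {s : Set E} {f : E → 𝕜} {c : 𝕜}
    (hc : 0 < c) (hf : StrictConcaveOn 𝕜 s f) : StrictConcaveOn 𝕜 s fun x => c * f x := by
  refine ⟨hf.1, fun x hx y hy hxy p q hp hq hpq => ?_⟩
  calc p • (c * f x) + q • (c * f y) = c * (p • f x + q • f y) := by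
        simp only [smul_eq_mul]; ring
    _ < c * f (p • x + q • y) := mul_lt_mul_of_pos_left (hf.2 hx hy hxy hp hq hpq) hc

end StrictConcavity

section WeightedProduct

variable {ι : Type*} [Fintype ι] {w y : ι → ℝ}

theorem strictConcaveOn_sum_mul_log (hw : ∀ i, 0 < w i) :
    StrictConcaveOn ℝ (Set.univ.pi fun _ : ι => Set.Ioi 0)
      fun y => ∑ i, w i * Real.log (y i) :=
  strictConcaveOn_pi_sum fun i => strictConcaveOn_const_mul (hw i) strictConcaveOn_log_Ioi

theorem log_prod_rpow (hy : ∀ i, 0 < y i) :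
    Real.log (∏ i, y i ^ w i) = ∑ i, w i * Real.log (y i) := by
  rw [Real.log_prod fun i _ => (Real.rpow_pos_of_pos (hy i) _).ne']
  exact sum_congr rfl fun i _ => Real.log_rpow (hy i) _

theorem prod_rpow_pos (hy : ∀ i, 0 < y i) : 0 < ∏ i, y i ^ w i :=
  prod_pos fun i _ => Real.rpow_pos_of_pos (hy i) _

theorem pos_of_prod_rpow_pos (hy : ∀ i, 0 ≤ y i) (hw : ∀ i, w i ≠ 0)
    (h : 0 < ∏ i, y i ^ w i) (i : ι) : 0 < y i := by
  refine (hy i).lt_of_ne' fun hyi => h.ne' ?_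
  exact prod_eq_zero (mem_univ i) (by rw [hyi, Real.zero_rpow (hw i)])

theorem isMaxOn_sum_mul_log {K : Set (ι → ℝ)} (hy : ∀ i, 0 < y i)
    (hmax : IsMaxOn (fun z => ∏ i, z i ^ w i) K y) :
    IsMaxOn (fun z => ∑ i, w i * Real.log (z i)) (K ∩ Set.univ.pi fun _ => Set.Ioi 0) y := by
  refine isMaxOn_iff.mpr fun z ⟨hzK, hz⟩ => ?_
  have hz_pos : ∀ i, 0 < z i := fun i => hz i trivial
  rw [← log_prod_rpow hz_pos, ← log_prod_rpow hy]
  exact Real.log_le_log (prod_rpow_pos hz_pos) (hmax hzK)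

theorem eq_of_isMaxOn_prod_rpow (hw : ∀ i, 0 < w i) {K : Set (ι → ℝ)} (hK : Convex ℝ K)
    {a b : ι → ℝ} (haK : a ∈ K) (hbK : b ∈ K) (ha : ∀ i, 0 < a i) (hb : ∀ i, 0 < b i)
    (ha_max : IsMaxOn (fun y => ∏ i, y i ^ w i) K a)
    (hb_max : IsMaxOn (fun y => ∏ i, y i ^ w i) K b) : a = b := by
  have hconc := strictConcaveOn_sum_mul_log hw
  exact (hconc.subset Set.inter_subset_right (hK.inter hconc.1)).eq_of_isMaxOn
    (isMaxOn_sum_mul_log ha ha_max) (isMaxOn_sum_mul_log hb hb_max)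
    ⟨haK, fun i _ => ha i⟩ ⟨hbK, fun i _ => hb i⟩

end WeightedProduct

section Distribution

variable {A : Type*} [Fintype A]

theorem convex_setOf_isDistribution (V : ℝ) : Convex ℝ {δ : A → ℝ | IsDistribution δ V} := by
  rintro δ ⟨hδ, hδV⟩ δ' ⟨hδ', hδV'⟩ p q hp hq hpq
  refine ⟨fun x => add_nonneg (mul_nonneg hp (hδ x)) (mul_nonneg hq (hδ' x)), ?_⟩
  simp only [Pi.add_apply, Pi.smul_apply, smul_eq_mul, sum_add_distrib, ← mul_sum, hδV, hδV']
  rw [← add_mul, hpq, one_mul]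

theorem exists_isDistribution_forall_pos [Nonempty A] {V : ℝ} (hV : 0 < V) :
    ∃ δ : A → ℝ, IsDistribution δ V ∧ ∀ x, 0 < δ x := by
  have hpos : 0 < V / Fintype.card A := by positivity
  refine ⟨fun _ => V / Fintype.card A, ⟨fun _ => hpos.le, ?_⟩, fun _ => hpos⟩
  rw [sum_const, card_univ, nsmul_eq_mul]
  field_simp

theorem util_nonneg {u δ : A → ℝ} (hu : ∀ x, 0 ≤ u x) (hδ : ∀ x, 0 ≤ δ x) : 0 ≤ util u δ :=
  sum_nonneg fun x _ => mul_nonneg (hδ x) (hu x)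

theorem util_pos {u δ : A → ℝ} (hu : ∀ x, 0 ≤ u x) (hacc : ∃ x, 0 < u x) (hδ : ∀ x, 0 < δ x) :
    0 < util u δ := by
  obtain ⟨x, hx⟩ := hacc
  exact sum_pos' (fun y _ => mul_nonneg (hδ y).le (hu y)) ⟨x, mem_univ x, mul_pos (hδ x) hx⟩

end Distribution

section UtilityProfile

variable {A N : Type*} [Fintype A]

/-- The utility profile `(u_i(δ))_{i ∈ N}` of a distribution `δ`, as a point of `N → ℝ`. -/
def utilProfile (u : N → A → ℝ) (δ : A → ℝ) : N → ℝ :=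
  fun i => util (u i) δ

theorem isLinearMap_utilProfile (u : N → A → ℝ) : IsLinearMap ℝ (utilProfile u) where
  map_add δ δ' := by
    ext i
    simp only [utilProfile, util, Pi.add_apply, add_mul, sum_add_distrib]
  map_smul c δ := by
    ext i
    simp only [utilProfile, util, Pi.smul_apply, smul_eq_mul, mul_assoc, mul_sum]

/-- The set of utility profiles achieved by the distributions of value `V`. -/
def feasibleProfiles (u : N → A → ℝ) (V : ℝ) : Set (N → ℝ) :=
  utilProfile u '' {δ | IsDistribution δ V}

theorem convex_feasibleProfiles (u : N → A → ℝ) (V : ℝ) : Convex ℝ (feasibleProfiles u V) :=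
  (convex_setOf_isDistribution V).is_linear_image (isLinearMap_utilProfile u)

end UtilityProfile

namespace IsNashDistribution

variable {A N : Type*} [Fintype A] [Fintype N] {u : N → A → ℝ} {C : N → ℝ} {δ : A → ℝ}

theorem utilProfile_mem (hδ : IsNashDistribution u C δ) :
    utilProfile u δ ∈ feasibleProfiles u (∑ i, C i) :=
  Set.mem_image_of_mem _ hδ.1

theorem isMaxOn_utilProfile (hδ : IsNashDistribution u C δ) :
    IsMaxOn (fun y => ∏ i, y i ^ C i) (feasibleProfiles u (∑ i, C i)) (utilProfile u δ) := by
  rintro _ ⟨δ', hδ', rfl⟩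
  exact hδ.2 δ' hδ'

theorem utilProfile_pos (hδ : IsNashDistribution u C δ) (hu : ∀ i x, 0 ≤ u i x)
    (hC : ∀ i, 0 < C i) (hacc : ∀ i, ∃ x, 0 < u i x) (i : N) : 0 < utilProfile u δ i := by
  have : Nonempty A := (hacc i).nonempty
  have hV : 0 < ∑ j, C j := sum_pos (fun j _ => hC j) ⟨i, mem_univ i⟩
  obtain ⟨ε, hε, hε_pos⟩ := exists_isDistribution_forall_pos (A := A) hV
  have hprod : 0 < nashProduct u C δ :=
    (prod_rpow_pos fun j => util_pos (hu j) (hacc j) hε_pos).trans_le (hδ.2 ε hε)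
  exact pos_of_prod_rpow_pos (fun j => util_nonneg (hu j) hδ.1.1) (fun j => (hC j).ne') hprod i

end IsNashDistribution

theorem nash_utilities_unique {A N : Type*} [Fintype A] [Nonempty A] [Fintype N]
    (u : N → A → ℝ) (hu : ∀ i x, 0 ≤ u i x)
    (C : N → ℝ) (hC : ∀ i, 0 < C i)
    (hacc : ∀ i, ∃ x, 0 < u i x)
    (δ δ' : A → ℝ) (hδ : IsNashDistribution u C δ) (hδ' : IsNashDistribution u C δ') :
    ∀ i, util (u i) δ = util (u i) δ' := by
  have hprofile : utilProfile u δ = utilProfile u δ' :=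
    eq_of_isMaxOn_prod_rpow hC (convex_feasibleProfiles u _)
      hδ.utilProfile_mem hδ'.utilProfile_mem
      (hδ.utilProfile_pos hu hC hacc) (hδ'.utilProfile_pos hu hC hacc)
      hδ.isMaxOn_utilProfile hδ'.isMaxOn_utilProfile
  exact congrFun hprofile
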